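/- arXiv:1412.1033 — 2 statements merged into one kernel-verified Lean document; each statement's English description precedes it below -/
import Mathlib

section
/- The group homomorphism from the free group on three generators to the group of invertible 2×2 matrices over ℂ that sends the three generators to V₁, V₂, V₃ respectively is injective; that is, V₁, V₂, V₃ are free generators of the subgroup of SU(2) that they generate. -/
open Matrix

/-- The Pauli matrices `X, Y, Z`. -/
def Pauli : Fin 3 → Matrix (Fin 2) (Fin 2) ℂ :=
  ![!![0, 1; 1, 0], !![0, -Complex.I; Complex.I, 0], !![1, 0; 0, -1]]

/-- `V₁ = (I + 2iX)/√5`, `V₂ = (I + 2iY)/√5`, `V₃ = (I + 2iZ)/√5`. -/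
noncomputable def Vgen (i : Fin 3) : Matrix (Fin 2) (Fin 2) ℂ :=
  ((Real.sqrt 5 : ℝ) : ℂ)⁻¹ • (1 + (2 * Complex.I) • Pauli i)

/-!
Up to scalars, each `Vᵢ` is an integral quaternion of norm `5` and its inverse is the conjugate
quaternion. Suppose that the product of a reduced word is divisible by `5`; let `l` be its first
letter and `q` the product of the remaining letters, the first of which is `m`. Then `5` divides
`l * q`, and also `star m * q` because `star m * m = 5`, hence it divides `(l - star m) * q`.
Since the word is reduced, `l ≠ star m`, and distinct letters differ by a quaternion of norm `8`
or `16`, which is prime to `5`; multiplying by its conjugate shows that `5` divides `q`. One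
descends in this way to a single letter `l`, where `5` would divide both `l` and `star l`, hence
`l - star l`, hence `1`. So no product `q` of a nonempty reduced word is divisible by `5`. It is
not a scalar `r` either: its norm `r ^ 2` is a positive power of `5`, so `5` would divide `r`.
-/

open Quaternion

section Divisibility

variable {R : Type*} [CommRing R] {r p : R} {x y q : ℍ[R]}

lemma coe_dvd_quaternion_iff :
    (r : ℍ[R]) ∣ q ↔ r ∣ q.re ∧ r ∣ q.imI ∧ r ∣ q.imJ ∧ r ∣ q.imK := by
  constructor
  · rintro ⟨s, rfl⟩
    simp [coe_mul_eq_smul]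
  · rintro ⟨⟨a, ha⟩, ⟨b, hb⟩, ⟨c, hc⟩, ⟨d, hd⟩⟩
    exact ⟨⟨a, b, c, d⟩, (Quaternion.ext _ _ ha hb hc hd).trans (coe_mul_eq_smul r _).symm⟩

lemma coe_dvd_mul_left (h : (r : ℍ[R]) ∣ q) (x : ℍ[R]) : (r : ℍ[R]) ∣ x * q := by
  obtain ⟨s, rfl⟩ := h
  exact ⟨x * s, by rw [← mul_assoc, ← coe_commutes, mul_assoc]⟩

lemma coe_dvd_star (h : (r : ℍ[R]) ∣ q) : (r : ℍ[R]) ∣ star q := by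
  simpa [coe_dvd_quaternion_iff] using h

lemma coe_dvd_of_dvd_mul (hp : Prime p) (hx : ¬ p ∣ normSq x) (h : (p : ℍ[R]) ∣ x * q) :
    (p : ℍ[R]) ∣ q := by
  have hnorm : (p : ℍ[R]) ∣ normSq x • q := by
    rw [← coe_mul_eq_smul, ← star_mul_self, mul_assoc]
    exact coe_dvd_mul_left h (star x)
  simpa [coe_dvd_quaternion_iff, hp.dvd_mul, hx] using hnorm

lemma coe_dvd_of_dvd_mul_of_dvd_mul (hp : Prime p) (hxy : ¬ p ∣ normSq (x - y))
    (hx : (p : ℍ[R]) ∣ x * q) (hy : (p : ℍ[R]) ∣ y * q) : (p : ℍ[R]) ∣ q :=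
  coe_dvd_of_dvd_mul hp hxy (by simpa only [sub_mul] using dvd_sub hx hy)

end Divisibility

section Words

variable {ι R : Type*} [CommRing R] {p : R} {a : ι → ℍ[R]}

/-- The quaternion of a letter of a word in the free group on `ι`: the conjugate `star (a i)`
stands for the inverse of the generator `i`, with which it agrees up to the scalar
`normSq (a i)`. -/
def letterQuaternion (a : ι → ℍ[R]) (l : ι × Bool) : ℍ[R] :=
  cond l.2 (a l.1) (star (a l.1))

/-- The product of the quaternions of the letters of a word. It represents the word up to scalars
and involves no division, so that its divisibility by `p` is meaningful. -/
def wordQuaternion (a : ι → ℍ[R]) (L : List (ι × Bool)) : ℍ[R] :=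
  (L.map (letterQuaternion a)).prod

lemma wordQuaternion_cons (l : ι × Bool) (L : List (ι × Bool)) :
    wordQuaternion a (l :: L) = letterQuaternion a l * wordQuaternion a L := by
  simp [wordQuaternion]

lemma letterQuaternion_not (l : ι × Bool) :
    letterQuaternion a (l.1, !l.2) = star (letterQuaternion a l) := by
  obtain ⟨i, _ | _⟩ := l <;> simp [letterQuaternion]

lemma normSq_letterQuaternion (l : ι × Bool) :
    normSq (letterQuaternion a l) = normSq (a l.1) := by
  obtain ⟨i, _ | _⟩ := l <;> simp [letterQuaternion]

lemma not_coe_dvd_wordQuaternion (hp : Prime p) (hnorm : ∀ i, p ∣ normSq (a i))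
    (hsep : ∀ l m, l ≠ m → ¬ p ∣ normSq (letterQuaternion a l - letterQuaternion a m)) :
    ∀ {L : List (ι × Bool)}, FreeGroup.IsReduced L → ¬ (p : ℍ[R]) ∣ wordQuaternion a L
  | [], _, h => by
    simp [wordQuaternion, coe_dvd_quaternion_iff, hp.not_dvd_one] at h
  | [l], _, h => by
    rw [wordQuaternion_cons] at h
    have hstar : (p : ℍ[R]) ∣ letterQuaternion a (l.1, !l.2) * wordQuaternion a [] := by
      rw [letterQuaternion_not]
      simpa [wordQuaternion] using coe_dvd_star h
    have hne : l ≠ (l.1, !l.2) := by simp [Prod.ext_iff]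
    exact not_coe_dvd_wordQuaternion hp hnorm hsep .nil
      (coe_dvd_of_dvd_mul_of_dvd_mul hp (hsep _ _ hne) h hstar)
  | l :: m :: L, hred, h => by
    obtain ⟨hlm, hred'⟩ := FreeGroup.isReduced_cons_cons.mp hred
    rw [wordQuaternion_cons] at h
    have hstar : (p : ℍ[R]) ∣ letterQuaternion a (m.1, !m.2) * wordQuaternion a (m :: L) := by
      rw [wordQuaternion_cons, letterQuaternion_not, ← mul_assoc, star_mul_self,
        normSq_letterQuaternion]
      exact dvd_mul_of_dvd_left (by simpa [coe_dvd_quaternion_iff] using hnorm m.1) _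
    have hne : l ≠ (m.1, !m.2) := by
      rintro rfl
      simp at hlm
    exact not_coe_dvd_wordQuaternion hp hnorm hsep hred'
      (coe_dvd_of_dvd_mul_of_dvd_mul hp (hsep _ _ hne) h hstar)

lemma dvd_normSq_wordQuaternion (hnorm : ∀ i, p ∣ normSq (a i)) {L : List (ι × Bool)}
    (hL : L ≠ []) : p ∣ normSq (wordQuaternion a L) := by
  obtain ⟨l, L, rfl⟩ := List.exists_cons_of_ne_nil hL
  rw [wordQuaternion_cons, map_mul, normSq_letterQuaternion]
  exact dvd_mul_of_dvd_left (hnorm l.1) _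

theorem wordQuaternion_ne_coe (hp : Prime p) (hnorm : ∀ i, p ∣ normSq (a i))
    (hsep : ∀ l m, l ≠ m → ¬ p ∣ normSq (letterQuaternion a l - letterQuaternion a m))
    {L : List (ι × Bool)} (hred : FreeGroup.IsReduced L) (hL : L ≠ []) (r : R) :
    wordQuaternion a L ≠ r := by
  intro hr
  have hpr : p ∣ r := by
    have h := dvd_normSq_wordQuaternion hnorm hL
    rw [hr, normSq_coe] at h
    exact hp.dvd_of_dvd_pow h
  refine not_coe_dvd_wordQuaternion hp hnorm hsep hred ?_
  simpa [hr, coe_dvd_quaternion_iff] using hpr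

end Words

section Matrices

variable (R : Type*) [CommRing R] [Algebra R ℂ]

/-- The quaternion units `-iX, -iY, -iZ`; the sign is needed for the product of the first two to
be the third. -/
noncomputable def pauliBasis :
    QuaternionAlgebra.Basis (Matrix (Fin 2) (Fin 2) ℂ) (-1 : R) 0 (-1) where
  i := -Complex.I • Pauli 0
  j := -Complex.I • Pauli 1
  k := -Complex.I • Pauli 2
  i_mul_i := by simp [Pauli, Matrix.one_fin_two]
  j_mul_j := by simp [Pauli, Matrix.one_fin_two]
  i_mul_j := by simp [Pauli]
  j_mul_i := by simp [Pauli]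

variable {R}

/-- The representation of quaternions by complex `2 × 2` matrices given by the Pauli matrices. -/
noncomputable def quaternionMatrix : ℍ[R] →ₐ[R] Matrix (Fin 2) (Fin 2) ℂ :=
  (pauliBasis R).liftHom

lemma quaternionMatrix_apply (q : ℍ[R]) :
    quaternionMatrix q =
      !![algebraMap R ℂ q.re - algebraMap R ℂ q.imK * Complex.I,
          -algebraMap R ℂ q.imJ - algebraMap R ℂ q.imI * Complex.I;
        algebraMap R ℂ q.imJ - algebraMap R ℂ q.imI * Complex.I,
          algebraMap R ℂ q.re + algebraMap R ℂ q.imK * Complex.I] := by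
  change algebraMap R _ q.re + q.imI • (pauliBasis R).i + q.imJ • (pauliBasis R).j +
    q.imK • (pauliBasis R).k = _
  rw [Algebra.algebraMap_eq_smul_one, ← algebraMap_smul ℂ q.re, ← algebraMap_smul ℂ q.imI,
    ← algebraMap_smul ℂ q.imJ, ← algebraMap_smul ℂ q.imK, Matrix.one_fin_two]
  simp [pauliBasis, Pauli, sub_eq_add_neg, add_comm, -algebraMap_smul]

lemma quaternionMatrix_injective [FaithfulSMul R ℂ] :
    Function.Injective (quaternionMatrix (R := R)) := by
  rw [injective_iff_map_eq_zero]
  intro q hq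
  have hinj := FaithfulSMul.algebraMap_injective R ℂ
  simp only [quaternionMatrix_apply, Matrix.eta_fin_two 0, Matrix.zero_apply,
    EmbeddingLike.apply_eq_iff_eq, Matrix.vecCons_inj, and_true] at hq
  obtain ⟨⟨h00, h01⟩, h10, h11⟩ := hq
  have hre : algebraMap R ℂ q.re = 0 := by linear_combination (h00 + h11) / 2
  have hI : algebraMap R ℂ q.imI = 0 := by
    linear_combination Complex.I * (h01 + h10) / 2 + algebraMap R ℂ q.imI * Complex.I_mul_I
  have hJ : algebraMap R ℂ q.imJ = 0 := by linear_combination (h10 - h01) / 2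
  have hK : algebraMap R ℂ q.imK = 0 := by
    linear_combination Complex.I * (h00 - h11) / 2 + algebraMap R ℂ q.imK * Complex.I_mul_I
  rw [map_eq_zero_iff _ hinj] at hre hI hJ hK
  exact Quaternion.ext _ _ hre hI hJ hK

lemma adjugate_quaternionMatrix (q : ℍ[R]) :
    (quaternionMatrix q).adjugate = quaternionMatrix (star q) := by
  simp [quaternionMatrix_apply, Matrix.adjugate_fin_two_of, sub_eq_add_neg, add_comm]

lemma eq_coe_of_smul_quaternionMatrix_eq_one [FaithfulSMul R ℂ] {c : ℂ} {q : ℍ[R]}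
    (h : c • quaternionMatrix q = 1) : q = q.re := by
  have hinj := FaithfulSMul.algebraMap_injective R ℂ
  have : CharZero R := (algebraMap R ℂ).charZero
  have : NoZeroDivisors R := hinj.noZeroDivisors _ (map_zero _) (map_mul _)
  have hstar : c • quaternionMatrix (star q) = 1 := by
    simpa [Matrix.adjugate_smul, adjugate_quaternionMatrix] using congrArg Matrix.adjugate h
  have hc : c ≠ 0 := by
    rintro rfl
    simp at h
  have hmat : quaternionMatrix (star q) = quaternionMatrix q :=
    smul_right_injective _ hc (hstar.trans h.symm)
  exact star_eq_self.mp (quaternionMatrix_injective hmat)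

lemma exists_inv_eq_smul_quaternionMatrix_star {g : GL (Fin 2) ℂ} {q : ℍ[R]}
    (hg : ∃ c : ℂ, (g : Matrix (Fin 2) (Fin 2) ℂ) = c • quaternionMatrix q) :
    ∃ c : ℂ, ((g⁻¹ : GL (Fin 2) ℂ) : Matrix (Fin 2) (Fin 2) ℂ) =
      c • quaternionMatrix (star q) := by
  obtain ⟨c, hc⟩ := hg
  rw [Matrix.coe_units_inv, Matrix.inv_def, hc, Matrix.adjugate_smul, adjugate_quaternionMatrix,
    smul_smul]
  exact ⟨_, rfl⟩

variable {ι : Type*} {a : ι → ℍ[R]} {φ : FreeGroup ι →* GL (Fin 2) ℂ}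

lemma exists_map_mk_singleton_eq_smul_quaternionMatrix
    (hφ : ∀ i, ∃ c : ℂ, (φ (.of i) : Matrix (Fin 2) (Fin 2) ℂ) = c • quaternionMatrix (a i)) :
    ∀ l : ι × Bool, ∃ c : ℂ,
      (φ (.mk [l]) : Matrix (Fin 2) (Fin 2) ℂ) = c • quaternionMatrix (letterQuaternion a l)
  | (i, true) => hφ i
  | (i, false) => by
    have hinv : FreeGroup.mk [(i, false)] = (FreeGroup.of i)⁻¹ := rfl
    rw [hinv, map_inv]
    exact exists_inv_eq_smul_quaternionMatrix_star (hφ i)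

lemma exists_map_mk_eq_smul_quaternionMatrix
    (hφ : ∀ i, ∃ c : ℂ, (φ (.of i) : Matrix (Fin 2) (Fin 2) ℂ) = c • quaternionMatrix (a i))
    (L : List (ι × Bool)) : ∃ c : ℂ,
      (φ (.mk L) : Matrix (Fin 2) (Fin 2) ℂ) = c • quaternionMatrix (wordQuaternion a L) := by
  induction L with
  | nil => exact ⟨1, by simp [wordQuaternion, ← FreeGroup.one_eq_mk]⟩
  | cons l L ih =>
    obtain ⟨c, hc⟩ := exists_map_mk_singleton_eq_smul_quaternionMatrix hφ l
    obtain ⟨d, hd⟩ := ih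
    have hmk : FreeGroup.mk (l :: L) = FreeGroup.mk [l] * FreeGroup.mk L := by
      rw [FreeGroup.mul_mk, List.singleton_append]
    refine ⟨c * d, ?_⟩
    rw [hmk, map_mul, Units.val_mul, hc, hd, smul_mul_smul_comm, wordQuaternion_cons, map_mul]

theorem stmt6_general [FaithfulSMul R ℂ] {p : R} (hp : Prime p) (hnorm : ∀ i, p ∣ normSq (a i))
    (hsep : ∀ l m, l ≠ m → ¬ p ∣ normSq (letterQuaternion a l - letterQuaternion a m))
    (hφ : ∀ i, ∃ c : ℂ, (φ (.of i) : Matrix (Fin 2) (Fin 2) ℂ) = c • quaternionMatrix (a i)) :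
    Function.Injective φ := by
  classical
  rw [injective_iff_map_eq_one]
  intro w hw
  by_contra hne
  obtain ⟨c, hc⟩ := exists_map_mk_eq_smul_quaternionMatrix hφ w.toWord
  rw [FreeGroup.mk_toWord, hw, Units.val_one] at hc
  exact wordQuaternion_ne_coe hp hnorm hsep FreeGroup.isReduced_toWord
    (mt FreeGroup.toWord_eq_nil_iff.mp hne) _ (eq_coe_of_smul_quaternionMatrix_eq_one hc.symm)

end Matrices

/-- The integral quaternions `1 - 2i, 1 - 2j, 1 - 2k` of norm `5`, which represent `√5 • Vᵢ`. -/
def vQuaternion : Fin 3 → ℍ[ℤ] :=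
  ![⟨1, -2, 0, 0⟩, ⟨1, 0, -2, 0⟩, ⟨1, 0, 0, -2⟩]

lemma normSq_vQuaternion (i : Fin 3) : normSq (vQuaternion i) = 5 := by
  fin_cases i <;> rfl

lemma not_five_dvd_normSq_letter_sub_letter (l m : Fin 3 × Bool) (hlm : l ≠ m) :
    ¬ 5 ∣ normSq (letterQuaternion vQuaternion l - letterQuaternion vQuaternion m) := by
  revert l m
  decide

lemma Vgen_eq_smul_quaternionMatrix (i : Fin 3) :
    Vgen i = ((Real.sqrt 5 : ℝ) : ℂ)⁻¹ • quaternionMatrix (vQuaternion i) := by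
  rw [Vgen, quaternionMatrix_apply]
  congr 1
  fin_cases i <;> simp [vQuaternion, Pauli, Matrix.one_fin_two, mul_assoc]

/-- `V₁, V₂, V₃` freely generate the subgroup of `SU(2)` that they generate: the
homomorphism from the free group on three generators sending the generators to
`V₁, V₂, V₃` is injective. -/
theorem stmt6 (φ : FreeGroup (Fin 3) →* GL (Fin 2) ℂ)
    (hφ : ∀ i : Fin 3, ((φ (FreeGroup.of i) : GL (Fin 2) ℂ) : Matrix (Fin 2) (Fin 2) ℂ) = Vgen i) :
    Function.Injective φ := by
  have hprime : Prime (5 : ℤ) := Int.prime_ofNat_iff.mpr Nat.prime_five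
  have hnorm (i : Fin 3) : 5 ∣ normSq (vQuaternion i) := (normSq_vQuaternion i).symm.dvd
  exact stmt6_general hprime hnorm not_five_dvd_normSq_letter_sub_letter
    fun i => ⟨_, (hφ i).trans (Vgen_eq_smul_quaternionMatrix i)⟩
end

section
/- Suppose A₁⋯A_t·B = A'₁⋯A'_{t'}·B', where A₁⋯A_t and A'₁⋯A'_{t'} are reduced products of matrices taken from {V₁, V₂, V₃, V₁⁻¹, V₂⁻¹, V₃⁻¹} and B, B' ∈ {I, −I, X, −X, Y, −Y, Z, −Z}. Then t = t', A_j = A'_j for all 1 ≤ j ≤ t, and B = B'. In other words, every element of the group generated by V₁, V₂, V₃, X, Y, Z has a unique normal form A₁⋯A_t·B. -/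
open Matrix

/-- The factor corresponding to the letter `(i, b)`: `Vᵢ` if `b = true`,
`Vᵢ⁻¹` if `b = false`. -/
noncomputable def VgenLetter (p : Fin 3 × Bool) : Matrix (Fin 2) (Fin 2) ℂ :=
  if p.2 then Vgen p.1 else (Vgen p.1)⁻¹

/-!
For words `A₁⋯A_t` and `A'₁⋯A'_{t'}`, the equation `A₁⋯A_t B = A'₁⋯A'_{t'} B'` says that an
element of the group generated by the `Vᵢ` equals `B' B⁻¹`, which has entries in `ℤ[i]`. It
therefore suffices that a nonempty reduced word of length `n` in the `Vᵢ^{±1}` is never a matrix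
over `ℤ[i]`. If it were, the corresponding product of the Gaussian integer matrices `√5 Vᵢ^{±1}`
would be `√5ⁿ` times a matrix over `ℤ[i]`, hence would vanish under the reduction `ℤ[i] → 𝔽₅`,
`i ↦ 2`. But this reduction sends `√5 Vᵢ^{±1}` to `1 ∓ Pauli i`, twice the projection onto an
eigenline of `Pauli i`. A product of rank-one matrices vanishes only if two neighbouring factors
already annihilate each other, which here happens only for `Vᵢ Vᵢ⁻¹` and `Vᵢ⁻¹ Vᵢ`.
-/

section RankOne

variable {l m n o R : Type*} [Fintype m] [Fintype n] [CommRing R]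

lemma mul_apply_mul_mul_apply_of_minors_eq_zero {B : Matrix m n R}
    (hB : ∀ i i' j j', B i j * B i' j' = B i j' * B i' j)
    (A : Matrix l m R) (C : Matrix n o R) (i : l) (j : n) (k : m) (q : o) :
    (A * B) i j * (B * C) k q = B k j * (A * B * C) i q := by
  simp only [mul_apply, Finset.sum_mul, Finset.mul_sum]
  refine Finset.sum_congr rfl fun b _ ↦ Finset.sum_congr rfl fun a _ ↦ ?_
  linear_combination A i a * C b q * hB a k j b

variable [NoZeroDivisors R]

lemma mul_mul_ne_zero_of_minors_eq_zero {A : Matrix l m R} {B : Matrix m n R} {C : Matrix n o R}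
    (hB : ∀ i i' j j', B i j * B i' j' = B i j' * B i' j) (hAB : A * B ≠ 0) (hBC : B * C ≠ 0) :
    A * B * C ≠ 0 := by
  intro hABC
  obtain ⟨i, j, hij⟩ : ∃ i j, (A * B) i j ≠ 0 := by simpa [← Matrix.ext_iff] using hAB
  obtain ⟨k, q, hkq⟩ : ∃ k q, (B * C) k q ≠ 0 := by simpa [← Matrix.ext_iff] using hBC
  apply mul_ne_zero hij hkq
  rw [mul_apply_mul_mul_apply_of_minors_eq_zero hB, hABC, Matrix.zero_apply, mul_zero]

lemma prod_map_ne_zero_of_minors_eq_zero [DecidableEq n] [Nontrivial (Matrix n n R)]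
    {α : Type*} {M : α → Matrix n n R}
    (hM : ∀ a i i' j j', M a i j * M a i' j' = M a i j' * M a i' j) (hM₀ : ∀ a, M a ≠ 0) :
    ∀ {w : List α}, w.IsChain (fun a b ↦ M a * M b ≠ 0) → (w.map M).prod ≠ 0
  | [], _ => by simp
  | [a], _ => by simpa using hM₀ a
  | a :: b :: w, h => by
    obtain ⟨hab, hw⟩ := List.isChain_cons_cons.1 h
    have ih : M b * (w.map M).prod ≠ 0 := by
      simpa using prod_map_ne_zero_of_minors_eq_zero hM hM₀ hw
    simpa [mul_assoc] using mul_mul_ne_zero_of_minors_eq_zero (hM b) hab ih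

end RankOne

section ScaledLetter

variable {R S : Type*} [CommRing R] [CommRing S]

/-- The Pauli matrices over a commutative ring in which `j` plays the role of the imaginary
unit, so that one formula covers `ℂ`, the Gaussian integers and `ZMod 5`. -/
def pauliOver (j : R) : Fin 3 → Matrix (Fin 2) (Fin 2) R :=
  ![!![0, 1; 1, 0], !![0, -j; j, 0], !![1, 0; 0, -1]]

/-- The matrix `√5 Vᵢ` for the letter `(i, true)`, and `√5 Vᵢ⁻¹` for `(i, false)`, over a
commutative ring in which `j` plays the role of the imaginary unit. -/
def scaledLetter (j : R) (p : Fin 3 × Bool) : Matrix (Fin 2) (Fin 2) R :=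
  1 + (if p.2 then 2 * j else -(2 * j)) • pauliOver j p.1

lemma pauliOver_mul_self {j : R} (hj : j * j = -1) (i : Fin 3) :
    pauliOver j i * pauliOver j i = 1 := by
  fin_cases i <;> simp [pauliOver, hj, one_fin_two]

lemma scaledLetter_false_mul_true {j : R} (hj : j * j = -1) (i : Fin 3) :
    scaledLetter j (i, false) * scaledLetter j (i, true) = (5 : R) • 1 := by
  have h4 : 2 * j * (2 * j) = -4 := by linear_combination 4 * hj
  simp only [scaledLetter, if_true, Bool.false_eq_true, if_false, add_mul, mul_add, one_mul,
    mul_one, smul_mul_smul_comm, pauliOver_mul_self hj, neg_mul, h4]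
  module

lemma map_pauliOver (φ : R →+* S) (j : R) (i : Fin 3) :
    φ.mapMatrix (pauliOver j i) = pauliOver (φ j) i := by
  ext a b
  fin_cases i <;> fin_cases a <;> fin_cases b <;> simp [pauliOver]

lemma map_scaledLetter (φ : R →+* S) (j : R) (p : Fin 3 × Bool) :
    φ.mapMatrix (scaledLetter j p) = scaledLetter (φ j) p := by
  have map_smul (c : R) (M : Matrix (Fin 2) (Fin 2) R) :
      φ.mapMatrix (c • M) = φ c • φ.mapMatrix M := Matrix.map_smul' φ c M (map_mul φ)
  simp only [scaledLetter, map_add, map_one, map_smul, map_pauliOver]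
  split <;> simp only [map_neg, map_mul, map_ofNat]

lemma map_prod_scaledLetter (φ : R →+* S) (j : R) (w : List (Fin 3 × Bool)) :
    φ.mapMatrix (w.map (scaledLetter j)).prod = (w.map (scaledLetter (φ j))).prod := by
  simp only [map_list_prod, List.map_map, Function.comp_def, map_scaledLetter]

end ScaledLetter

section ModFive

instance fact_prime_five : Fact (Nat.Prime 5) := ⟨by norm_num⟩

/-- The reduction `ℤ[i] → 𝔽₅` modulo the prime `2 - i`, which sends `i` to `2`. -/
def reduceModFive : GaussianInt →+* ZMod 5 := Zsqrtd.lift ⟨2, by decide⟩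

lemma scaledLetter_two_minors_eq_zero : ∀ (p : Fin 3 × Bool) (i i' j j' : Fin 2),
    scaledLetter (2 : ZMod 5) p i j * scaledLetter 2 p i' j' =
      scaledLetter 2 p i j' * scaledLetter 2 p i' j := by
  decide

lemma scaledLetter_two_mul_ne_zero : ∀ p q : Fin 3 × Bool, (p.1 = q.1 → p.2 = q.2) →
    scaledLetter (2 : ZMod 5) p * scaledLetter 2 q ≠ 0 := by
  decide

lemma prod_scaledLetter_two_ne_zero {w : List (Fin 3 × Bool)} (hw : FreeGroup.IsReduced w) :
    (w.map (scaledLetter (2 : ZMod 5))).prod ≠ 0 :=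
  prod_map_ne_zero_of_minors_eq_zero scaledLetter_two_minors_eq_zero
    (fun p ↦ left_ne_zero_of_mul (scaledLetter_two_mul_ne_zero p p fun _ ↦ rfl))
    (hw.imp scaledLetter_two_mul_ne_zero)

end ModFive

section Vgen

lemma sqrt_five_mul_self : ((Real.sqrt 5 : ℝ) : ℂ) * (Real.sqrt 5 : ℝ) = 5 := by
  rw [← Complex.ofReal_mul, Real.mul_self_sqrt (by norm_num), Complex.ofReal_ofNat]

lemma sqrt_five_ne_zero : ((Real.sqrt 5 : ℝ) : ℂ) ≠ 0 :=
  left_ne_zero_of_mul (sqrt_five_mul_self.trans_ne (by norm_num))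

lemma reduceModFive_eq_zero {a b : GaussianInt} {n : ℕ} (hn : n ≠ 0)
    (h : (a : ℂ) = ((Real.sqrt 5 : ℝ) : ℂ) ^ n * b) : reduceModFive a = 0 := by
  -- Squaring makes both sides Gaussian integers even when `n` is odd.
  have hsq : a * a = 5 ^ n * (b * b) := by
    apply GaussianInt.toComplex_injective
    simp only [map_mul, map_pow, map_ofNat, h]
    rw [mul_mul_mul_comm, ← mul_pow, sqrt_five_mul_self]
  have hfive : reduceModFive 5 = 0 := by decide
  have hred := congrArg reduceModFive hsq
  rw [map_mul, map_mul, map_pow, hfive, zero_pow hn, zero_mul] at hred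
  exact mul_self_eq_zero.1 hred

lemma Vgen_eq_smul_scaledLetter (i : Fin 3) :
    Vgen i = ((Real.sqrt 5 : ℝ) : ℂ)⁻¹ • scaledLetter Complex.I (i, true) := rfl

lemma scaledLetter_false_mul_Vgen (i : Fin 3) :
    (((Real.sqrt 5 : ℝ) : ℂ)⁻¹ • scaledLetter Complex.I (i, false)) * Vgen i = 1 := by
  rw [Vgen_eq_smul_scaledLetter, smul_mul_smul_comm,
    scaledLetter_false_mul_true Complex.I_mul_I, ← mul_inv, sqrt_five_mul_self,
    inv_smul_smul₀ (by norm_num)]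

lemma isUnit_Vgen (i : Fin 3) : IsUnit (Vgen i) :=
  IsUnit.of_mul_eq_one_right _ (scaledLetter_false_mul_Vgen i)

lemma VgenLetter_eq_smul_scaledLetter (p : Fin 3 × Bool) :
    VgenLetter p = ((Real.sqrt 5 : ℝ) : ℂ)⁻¹ • scaledLetter Complex.I p := by
  obtain ⟨i, _ | _⟩ := p
  · exact Matrix.inv_eq_left_inv (scaledLetter_false_mul_Vgen i)
  · exact Vgen_eq_smul_scaledLetter i

lemma prod_scaledLetter_I (w : List (Fin 3 × Bool)) :
    (w.map (scaledLetter Complex.I)).prod =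
      ((Real.sqrt 5 : ℝ) : ℂ) ^ w.length • (w.map VgenLetter).prod := by
  induction w with
  | nil => simp
  | cons p w ih =>
    have hp : scaledLetter Complex.I p = ((Real.sqrt 5 : ℝ) : ℂ) • VgenLetter p := by
      rw [VgenLetter_eq_smul_scaledLetter, smul_inv_smul₀ sqrt_five_ne_zero]
    rw [List.map_cons, List.map_cons, List.prod_cons, List.prod_cons, ih, hp, smul_mul_smul_comm,
      List.length_cons, pow_succ']

lemma eq_nil_of_isReduced_of_prod_eq_map {w : List (Fin 3 × Bool)} (hw : FreeGroup.IsReduced w)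
    {G : Matrix (Fin 2) (Fin 2) GaussianInt}
    (hG : (w.map VgenLetter).prod = GaussianInt.toComplex.mapMatrix G) : w = [] := by
  by_contra hne
  let i : GaussianInt := ⟨0, 1⟩
  have hi : GaussianInt.toComplex i = Complex.I := by simp [i, GaussianInt.toComplex_def]
  have hi₅ : reduceModFive i = 2 := by decide
  have hmul : GaussianInt.toComplex.mapMatrix (w.map (scaledLetter i)).prod =
      ((Real.sqrt 5 : ℝ) : ℂ) ^ w.length • GaussianInt.toComplex.mapMatrix G := by
    rw [map_prod_scaledLetter, hi, prod_scaledLetter_I, hG]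
  apply prod_scaledLetter_two_ne_zero hw
  rw [← hi₅, ← map_prod_scaledLetter]
  ext a b
  exact reduceModFive_eq_zero (List.length_eq_zero_iff.not.2 hne) (congrFun₂ hmul a b)

/-- The homomorphism from the free group on three generators that sends the generators to
`V₁, V₂, V₃`. -/
noncomputable def vgenHom : FreeGroup (Fin 3) →* GL (Fin 2) ℂ :=
  FreeGroup.lift fun i ↦ (isUnit_Vgen i).unit

lemma coe_vgenHom_mk (w : List (Fin 3 × Bool)) :
    (vgenHom (FreeGroup.mk w) : Matrix (Fin 2) (Fin 2) ℂ) = (w.map VgenLetter).prod := by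
  rw [vgenHom, FreeGroup.lift_mk, ← Units.coeHom_apply, map_list_prod, List.map_map]
  congr 2
  ext1 ⟨i, b⟩
  cases b <;> simp [VgenLetter]

lemma eq_one_of_vgenHom_eq_map {g : FreeGroup (Fin 3)} {G : GL (Fin 2) GaussianInt}
    (hG : vgenHom g = GeneralLinearGroup.map GaussianInt.toComplex G) : g = 1 := by
  rw [← FreeGroup.toWord_eq_nil_iff]
  apply eq_nil_of_isReduced_of_prod_eq_map FreeGroup.isReduced_toWord (G := G)
  rw [← coe_vgenHom_mk, FreeGroup.mk_toWord, hG]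
  rfl

end Vgen

section NormalForm

/-- The group `GL₂(ℤ[i])`, which contains the Pauli group, as a submonoid of the complex
matrices. -/
def gaussianGL : Submonoid (Matrix (Fin 2) (Fin 2) ℂ) :=
  (IsUnit.submonoid (Matrix (Fin 2) (Fin 2) GaussianInt)).map GaussianInt.toComplex.mapMatrix

lemma neg_mem_gaussianGL {B : Matrix (Fin 2) (Fin 2) ℂ} (hB : B ∈ gaussianGL) :
    -B ∈ gaussianGL := by
  obtain ⟨G, hG, rfl⟩ := hB
  exact ⟨-G, hG.neg, map_neg _ G⟩

lemma Pauli_mem_gaussianGL (i : Fin 3) : Pauli i ∈ gaussianGL := by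
  refine ⟨pauliOver ⟨0, 1⟩ i, IsUnit.of_mul_eq_one _ (pauliOver_mul_self (by decide) i), ?_⟩
  refine (map_pauliOver GaussianInt.toComplex ⟨0, 1⟩ i).trans ?_
  simp [GaussianInt.toComplex_def, pauliOver, Pauli]

lemma signed_Pauli_subset_gaussianGL :
    ({1, -1, Pauli 0, -Pauli 0, Pauli 1, -Pauli 1, Pauli 2, -Pauli 2} :
      Set (Matrix (Fin 2) (Fin 2) ℂ)) ⊆ gaussianGL := by
  simp [Set.insert_subset_iff, one_mem, neg_mem_gaussianGL, Pauli_mem_gaussianGL]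

lemma isReduced_of_isChain {α : Type*} {w : List (α × Bool)}
    (hw : w.IsChain fun p q ↦ q ≠ (p.1, !p.2)) : FreeGroup.IsReduced w :=
  hw.imp fun p q hpq h ↦ by
    by_contra hne
    exact hpq (Prod.ext h.symm (Bool.eq_not.2 (Ne.symm hne)))

theorem stmt7_general (w w' : List (Fin 3 × Bool))
    (hred : w.IsChain (fun p q => q ≠ (p.1, !p.2)))
    (hred' : w'.IsChain (fun p q => q ≠ (p.1, !p.2)))
    (B B' : Matrix (Fin 2) (Fin 2) ℂ) (hB : B ∈ gaussianGL) (hB' : B' ∈ gaussianGL)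
    (heq : (w.map VgenLetter).prod * B = (w'.map VgenLetter).prod * B') :
    w = w' ∧ B = B' := by
  obtain ⟨_, ⟨G, rfl⟩, rfl⟩ := hB
  obtain ⟨_, ⟨G', rfl⟩, rfl⟩ := hB'
  let φ := GeneralLinearGroup.map (n := Fin 2) GaussianInt.toComplex
  have hGL : vgenHom (FreeGroup.mk w) * φ G = vgenHom (FreeGroup.mk w') * φ G' := by
    apply Units.ext
    rw [Units.val_mul, Units.val_mul, coe_vgenHom_mk, coe_vgenHom_mk]
    exact heq
  have hquot : vgenHom ((FreeGroup.mk w')⁻¹ * FreeGroup.mk w) = φ (G' * G⁻¹) := by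
    rw [map_mul, map_inv, map_mul, map_inv, eq_mul_inv_iff_mul_eq, mul_assoc, hGL,
      inv_mul_cancel_left]
  have hmk : FreeGroup.mk w' = FreeGroup.mk w :=
    inv_mul_eq_one.1 (eq_one_of_vgenHom_eq_map hquot)
  have hw : w' = w := by
    rw [← (isReduced_of_isChain hred).reduce_eq, ← (isReduced_of_isChain hred').reduce_eq]
    exact FreeGroup.reduce.sound hmk
  rw [hmk, mul_right_inj] at hGL
  exact ⟨hw.symm, congrArg Units.val hGL⟩

end NormalForm

/-- Uniqueness of the normal form `A₁⋯A_t·B`: if two normal forms (a reduced word in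
the `Vᵢ^{±1}`'s followed by a signed Pauli factor) yield equal matrices, then they have
the same length, the same factors `A_j`, and the same Pauli factor `B`. -/
theorem stmt7 (w w' : List (Fin 3 × Bool))
    (hred : w.Chain' (fun p q => q ≠ (p.1, !p.2)))
    (hred' : w'.Chain' (fun p q => q ≠ (p.1, !p.2)))
    (B B' : Matrix (Fin 2) (Fin 2) ℂ)
    (hB : B ∈ ({1, -1, Pauli 0, -Pauli 0, Pauli 1, -Pauli 1, Pauli 2, -Pauli 2} :
      Set (Matrix (Fin 2) (Fin 2) ℂ)))
    (hB' : B' ∈ ({1, -1, Pauli 0, -Pauli 0, Pauli 1, -Pauli 1, Pauli 2, -Pauli 2} :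
      Set (Matrix (Fin 2) (Fin 2) ℂ)))
    (heq : (w.map VgenLetter).prod * B = (w'.map VgenLetter).prod * B') :
    w = w' ∧ B = B' :=
  stmt7_general w w' hred hred' B B' (signed_Pauli_subset_gaussianGL hB)
    (signed_Pauli_subset_gaussianGL hB') heq
end
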